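/- For every integer n ≥ 2 and every real ρ > 0, the variance in the momentum domain of the Abel-Poisson wavelet satisfies C(ρ)/A(ρ) = n(n+1) (n + (n+3) e^{2ρ} + e^{4ρ}) e^{2ρ} / ((n-1 + (n+1) e^{2ρ}) (e^{2ρ} - 1)²). -/

import Mathlib

/-- `S n m ρ = Σ_{l=1}^∞ C(l+n-2, l) · l^m · e^{-2ρl}`. -/
noncomputable def S (n : ℕ) (m : ℤ) (ρ : ℝ) : ℝ :=
  ∑' l : ℕ, (Nat.choose (l + 1 + n - 2) (l + 1) : ℝ) * ((l : ℝ) + 1) ^ m *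
    Real.exp (-2 * ρ * ((l : ℝ) + 1))

/-- `A(ρ) = (2/(n-1)) S_{n,2}(ρ) + S_{n,1}(ρ)`. -/
noncomputable def A (n : ℕ) (ρ : ℝ) : ℝ :=
  2 / ((n : ℝ) - 1) * S n 2 ρ + S n 1 ρ

/-- `C(ρ) = (2/(n-1)) S_{n,4}(ρ) + 3 S_{n,3}(ρ) + (n-1) S_{n,2}(ρ)`. -/
noncomputable def Cf (n : ℕ) (ρ : ℝ) : ℝ :=
  2 / ((n : ℝ) - 1) * S n 4 ρ + 3 * S n 3 ρ + ((n : ℝ) - 1) * S n 2 ρ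

/-! Put `n = k + 1`, `r = e^{-2ρ}` and `l = j + 1`. The absorption identity
`l C(l+k-1, l) = k C(l+k-1, k)` turns `S_{n,m+1}(ρ)` into `k r` times the sum of
`(j+1)^m C(j+k, k) r^j`. For `m = 0` this is the negative binomial series `(1-r)^{-(k+1)}`. A second
absorption identity trades each further factor `j+1` for an increment of `k`, so every such sum is
rational in `r`, and the common power `(1-r)^k` cancels in the quotient `C/A`. -/

/-- The polynomials `N_{m,k}` with `Σ_j (j+1)^m C(j+k,k) x^j = N_{m,k}(x) / (1-x)^(k+m+1)`,
evaluated at `x` and defined by recursion on `m`. For `k = 0` they are the Eulerian polynomials. -/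
def eulerianNumerator {R : Type*} [Ring R] (x : R) : ℕ → ℕ → R
  | 0, _ => 1
  | m + 1, k =>
    (k + 1) * eulerianNumerator x m (k + 1) - k * (1 - x) * eulerianNumerator x m k

section EulerianNumerator

variable {R : Type*} [CommRing R] (x : R) (k : ℕ)

lemma eulerianNumerator_one : eulerianNumerator x 1 k = 1 + k * x := by
  simp only [eulerianNumerator]
  ring

lemma eulerianNumerator_two :
    eulerianNumerator x 2 k = 1 + (3 * k + 1) * x + k ^ 2 * x ^ 2 := by
  rw [eulerianNumerator, eulerianNumerator_one, eulerianNumerator_one]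
  push_cast
  ring

lemma eulerianNumerator_three :
    eulerianNumerator x 3 k =
      1 + (7 * k + 4) * x + (6 * k ^ 2 + 4 * k + 1) * x ^ 2 + k ^ 3 * x ^ 3 := by
  rw [eulerianNumerator, eulerianNumerator_two, eulerianNumerator_two]
  push_cast
  ring

end EulerianNumerator

lemma cast_add_one_mul_choose_add {R : Type*} [CommRing R] (j k : ℕ) :
    ((j : R) + 1) * (j + k).choose k =
      (k + 1) * (j + (k + 1)).choose (k + 1) - k * (j + k).choose k := by
  have absorption := congrArg (Nat.cast (R := R)) (Nat.add_one_mul_choose_eq (j + k) k)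
  push_cast at absorption
  linear_combination absorption

lemma hasSum_add_one_pow_mul_choose_mul_geometric {𝕜 : Type*} [NormedField 𝕜] {x : 𝕜}
    (hx : ‖x‖ < 1) (m k : ℕ) :
    HasSum (fun j : ℕ ↦ ((j : 𝕜) + 1) ^ m * ((j + k).choose k * x ^ j))
      (eulerianNumerator x m k / (1 - x) ^ (k + m + 1)) := by
  have one_sub_ne_zero : 1 - x ≠ 0 := sub_ne_zero.2 fun h ↦ by simp [← h] at hx
  induction m generalizing k with
  | zero => simpa [eulerianNumerator] using hasSum_choose_mul_geometric_of_norm_lt_one k hx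
  | succ m ih =>
    convert! ((ih (k + 1)).mul_left ((k : 𝕜) + 1)).sub ((ih k).mul_left (k : 𝕜)) using 1
    · ext j
      linear_combination ((j : 𝕜) + 1) ^ m * x ^ j * cast_add_one_mul_choose_add (R := 𝕜) j k
    · rw [eulerianNumerator]
      field_simp
      ring

lemma choose_add_succ_mul_succ (j k : ℕ) :
    (j + k).choose (j + 1) * (j + 1) = (j + k).choose k * k := by
  rw [Nat.choose_succ_right_eq, Nat.add_sub_cancel_left, Nat.choose_symm_add]

lemma exp_neg_two_mul_lt_one {ρ : ℝ} (hρ : 0 < ρ) : Real.exp (-2 * ρ) < 1 := by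
  rw [Real.exp_lt_one_iff]
  linarith

lemma S_add_one (k m : ℕ) {ρ : ℝ} (hρ : 0 < ρ) :
    S (k + 1) (m + 1 : ℕ) ρ =
      k * Real.exp (-2 * ρ) * (eulerianNumerator (Real.exp (-2 * ρ)) m k /
        (1 - Real.exp (-2 * ρ)) ^ (k + m + 1)) := by
  have norm_lt_one : ‖Real.exp (-2 * ρ)‖ < 1 := by
    rw [Real.norm_of_nonneg (Real.exp_pos _).le]
    exact exp_neg_two_mul_lt_one hρ
  rw [S, ← ((hasSum_add_one_pow_mul_choose_mul_geometric norm_lt_one m k).mul_left _).tsum_eq]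
  refine tsum_congr fun j ↦ ?_
  have absorption : ((j + k).choose (j + 1) : ℝ) * (j + 1) = (j + k).choose k * k :=
    mod_cast choose_add_succ_mul_succ j k
  have exp_eq_pow : Real.exp (-2 * ρ * (j + 1)) = Real.exp (-2 * ρ) ^ (j + 1) := by
    rw [← Real.exp_nat_mul]
    push_cast
    ring_nf
  rw [show j + 1 + (k + 1) - 2 = j + k by omega, exp_eq_pow, zpow_natCast]
  linear_combination ((j : ℝ) + 1) ^ m * Real.exp (-2 * ρ) ^ (j + 1) * absorption

lemma A_add_one {k : ℕ} (hk : k ≠ 0) {ρ : ℝ} (hρ : 0 < ρ) :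
    A (k + 1) ρ = Real.exp (-2 * ρ) * (k + 2 + k * Real.exp (-2 * ρ)) /
      (1 - Real.exp (-2 * ρ)) ^ (k + 2) := by
  have hr := (sub_pos.2 (exp_neg_two_mul_lt_one hρ)).ne'
  have S1 : S (k + 1) 1 ρ = _ := S_add_one k 0 hρ
  have S2 : S (k + 1) 2 ρ = _ := S_add_one k 1 hρ
  rw [A, S1, S2, eulerianNumerator, eulerianNumerator_one, Nat.cast_add_one, add_sub_cancel_right]
  generalize Real.exp (-2 * ρ) = r at hr ⊢
  field_simp
  ring

lemma Cf_add_one {k : ℕ} (hk : k ≠ 0) {ρ : ℝ} (hρ : 0 < ρ) :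
    Cf (k + 1) ρ = (k + 1) * (k + 2) * Real.exp (-2 * ρ) *
      (1 + (k + 4) * Real.exp (-2 * ρ) + (k + 1) * Real.exp (-2 * ρ) ^ 2) /
      (1 - Real.exp (-2 * ρ)) ^ (k + 4) := by
  have hr := (sub_pos.2 (exp_neg_two_mul_lt_one hρ)).ne'
  have S2 : S (k + 1) 2 ρ = _ := S_add_one k 1 hρ
  have S3 : S (k + 1) 3 ρ = _ := S_add_one k 2 hρ
  have S4 : S (k + 1) 4 ρ = _ := S_add_one k 3 hρ
  rw [Cf, S2, S3, S4, eulerianNumerator_one, eulerianNumerator_two, eulerianNumerator_three,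
    Nat.cast_add_one, add_sub_cancel_right]
  generalize Real.exp (-2 * ρ) = r at hr ⊢
  field_simp
  ring

lemma Cf_div_A_add_one {k : ℕ} (hk : k ≠ 0) {ρ : ℝ} (hρ : 0 < ρ) :
    Cf (k + 1) ρ / A (k + 1) ρ =
      (k + 1) * (k + 2) *
        (1 + (k + 4) * Real.exp (-2 * ρ) + (k + 1) * Real.exp (-2 * ρ) ^ 2) /
      ((k + 2 + k * Real.exp (-2 * ρ)) * (1 - Real.exp (-2 * ρ)) ^ 2) := by
  have hr := (sub_pos.2 (exp_neg_two_mul_lt_one hρ)).ne'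
  have hr_pos := Real.exp_pos (-2 * ρ)
  rw [Cf_add_one hk hρ, A_add_one hk hρ]
  generalize Real.exp (-2 * ρ) = r at hr hr_pos ⊢
  have linear_factor_ne_zero : (k : ℝ) + 2 + k * r ≠ 0 := by positivity
  field_simp
  ring

/-- The variance in the momentum domain of the Abel-Poisson wavelet. -/
theorem stmt_6 (n : ℕ) (hn : 2 ≤ n) (ρ : ℝ) (hρ : 0 < ρ) :
    Cf n ρ / A n ρ =
      (n : ℝ) * ((n : ℝ) + 1) *
        ((n : ℝ) + ((n : ℝ) + 3) * Real.exp (2 * ρ) + Real.exp (4 * ρ)) * Real.exp (2 * ρ) /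
      ((((n : ℝ) - 1) + ((n : ℝ) + 1) * Real.exp (2 * ρ)) * (Real.exp (2 * ρ) - 1) ^ 2) := by
  obtain ⟨k, rfl⟩ : ∃ k, n = k + 1 := ⟨n - 1, by omega⟩
  have exp_neg_two : Real.exp (-2 * ρ) = (Real.exp (2 * ρ))⁻¹ := by rw [← Real.exp_neg, neg_mul]
  have exp_four : Real.exp (4 * ρ) = Real.exp (2 * ρ) ^ 2 := by
    rw [← Real.exp_nat_mul]
    ring_nf
  rw [Cf_div_A_add_one (by omega) hρ, exp_neg_two, exp_four, Nat.cast_add_one,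
    add_sub_cancel_right]
  have hE := Real.exp_pos (2 * ρ)
  generalize Real.exp (2 * ρ) = E at hE ⊢
  have linear_factor : (k : ℝ) + 2 + k * E⁻¹ = (k + (k + 1 + 1) * E) / E := by
    field_simp
    ring
  have one_sub_inv : 1 - E⁻¹ = (E - 1) / E := by field_simp
  rw [linear_factor, one_sub_inv]
  field_simp
  ring
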